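/- arXiv:1311.7084 — 3 statements merged into one kernel-verified Lean document; each statement's English description precedes it below -/
import Mathlib

section
/- Let h be a prime power, t ≥ 1, q = h^t, and let s, m, k be positive integers. Let H ⊆ F_q^{mk} be an (s,m,k)-periodic affine subspace with witness subspace W ⊆ F_q^m (dim_{F_q} W ≤ s), and let H_1,…,H_k be F_h-linear subspaces of F_q^m. Then for every i ∈ {1,…,k}, the set proj_{[1,im]}(H) ∩ (H_1 × ⋯ × H_i) has at most h^{Σ_{j=1}^i dim_{F_h}(W ∩ H_j)} elements. -/
/-!
Encode a point of a periodic set by recording, at each coordinate, its difference from a fixed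
representative of the points with the same earlier coordinates. Each difference lies in the witness
subgroup, and the earlier coordinates determine the representative, so the differences recover the
point one coordinate at a time. Truncating to an initial segment of coordinates preserves
periodicity, and intersecting with a product of subgroups shrinks the witnesses accordingly.
-/

/-- Periodicity of a set `S` of families of group elements, with one witness subgroup per
coordinate: once the coordinates before `j` are prescribed by `a`, the `j`-th one is confined to a
coset of `V j`. Only the values of `a` before `j` matter. The `(s,m,k)`-periodic affine subspaces
have `ι = Fin k`, `A j = F_q^m` and the same witness `V j = W` at every coordinate. -/
def IsPeriodic {ι : Type*} [LT ι] {A : ι → Type*} [∀ j, AddGroup (A j)]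
    (V : ∀ j, AddSubgroup (A j)) (S : Set (∀ j, A j)) : Prop :=
  ∀ j (a : ∀ j, A j), ∃ v : A j, ∀ x ∈ S, (∀ j' < j, x j' = a j') → x j - v ∈ V j

/-- `Fin.castLE` as an initial segment, along which `proj_{[1,im]}` restricts coordinates. -/
def castLEInitialSeg {i k : ℕ} (hik : i ≤ k) : Fin i ≤i Fin k where
  toRelEmbedding := (Fin.castLEOrderEmb hik).ltEmbedding
  mem_range_of_rel' a b hb := ⟨⟨b, lt_trans hb a.isLt⟩, rfl⟩

section LT

variable {ι κ : Type*} [LT ι] [LT κ] {A : κ → Type*} [∀ j, AddGroup (A j)]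
  {V : ∀ j, AddSubgroup (A j)} {S : Set (∀ j, A j)}

theorem isPeriodic_iff_sub_mem :
    IsPeriodic V S ↔ ∀ j, ∀ x ∈ S, ∀ y ∈ S, (∀ j' < j, x j' = y j') → x j - y j ∈ V j := by
  refine ⟨fun hS j x hx y hy hxy => ?_, fun hS j a => ?_⟩
  · obtain ⟨v, hv⟩ := hS j y
    simpa only [sub_sub_sub_cancel_right] using
      (V j).sub_mem (hv x hx hxy) (hv y hy fun _ _ => rfl)
  · by_cases ha : ∃ y ∈ S, ∀ j' < j, y j' = a j'
    · obtain ⟨y, hy, hya⟩ := ha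
      exact ⟨y j, fun x hx hxa => hS j x hx y hy fun j' hj' =>
        (hxa j' hj').trans (hya j' hj').symm⟩
    · exact ⟨0, fun x hx hxa => absurd ⟨x, hx, hxa⟩ ha⟩

theorem IsPeriodic.image_initialSeg (hS : IsPeriodic V S) (f : ι ≤i κ) :
    IsPeriodic (fun i => V (f i)) ((fun x i => x (f i)) '' S) := by
  rw [isPeriodic_iff_sub_mem] at hS ⊢
  rintro i _ ⟨x, hx, rfl⟩ _ ⟨y, hy, rfl⟩ hxy
  refine hS (f i) x hx y hy fun j hj => ?_
  obtain ⟨i', rfl, hi'⟩ := f.exists_eq_iff_rel.mp hj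
  exact hxy i' hi'

theorem IsPeriodic.inter_pi (hS : IsPeriodic V S) (U : ∀ j, AddSubgroup (A j)) :
    IsPeriodic (fun j => V j ⊓ U j) (S ∩ Set.univ.pi fun j => U j) := by
  rw [isPeriodic_iff_sub_mem] at hS ⊢
  rintro j x ⟨hxS, hxU⟩ y ⟨hyS, hyU⟩ hxy
  exact ⟨hS j x hxS y hyS hxy, (U j).sub_mem (hxU j trivial) (hyU j trivial)⟩

end LT

theorem IsPeriodic.natCard_le_prod {ι : Type*} [Preorder ι] [Fintype ι] {A : ι → Type*}
    [∀ j, AddGroup (A j)] {V : ∀ j, AddSubgroup (A j)} [∀ j, Finite (V j)] {S : Set (∀ j, A j)}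
    (hS : IsPeriodic V S) : Nat.card S ≤ ∏ j, Nat.card (V j) := by
  let agreeBelow (j : ι) : Setoid S := Setoid.ker fun x (j' : Set.Iio j) => x.1 j'
  let rep (j : ι) (x : S) : S := (Quotient.mk (agreeBelow j) x).out
  have agree_rep (j : ι) (x : S) : ∀ j' < j, x.1 j' = (rep j x).1 j' := fun j' hj' =>
    (congrFun (Quotient.mk_out (s := agreeBelow j) x) ⟨j', hj'⟩).symm
  have rep_congr {j : ι} {x y : S} (hxy : ∀ j' < j, x.1 j' = y.1 j') : rep j x = rep j y :=
    congrArg Quotient.out (Quotient.sound (s := agreeBelow j) (funext fun j' => hxy j' j'.2))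
  let diff (x : S) (j : ι) : V j :=
    ⟨x.1 j - (rep j x).1 j,
      isPeriodic_iff_sub_mem.mp hS j x x.2 (rep j x) (rep j x).2 (agree_rep j x)⟩
  have diff_injective : Function.Injective diff := by
    intro x y hxy
    refine Subtype.ext (funext fun j => ?_)
    induction j using WellFoundedLT.induction with
    | ind j ih =>
      have hj : x.1 j - (rep j x).1 j = y.1 j - (rep j y).1 j :=
        congrArg Subtype.val (congrFun hxy j)
      rw [rep_congr ih] at hj
      exact sub_left_injective hj
  rw [← Nat.card_pi]
  exact Nat.card_le_card_of_injective diff diff_injective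

theorem IsPeriodic.natCard_le_pow_sum_finrank {K ι : Type*} [DivisionRing K] [Finite K]
    [Preorder ι] [Fintype ι] {A : ι → Type*} [∀ j, AddCommGroup (A j)] [∀ j, Module K (A j)]
    {V : ∀ j, Submodule K (A j)} [∀ j, Module.Finite K (V j)] {S : Set (∀ j, A j)}
    (hS : IsPeriodic (fun j => (V j).toAddSubgroup) S) :
    Nat.card S ≤ Nat.card K ^ ∑ j, Module.finrank K (V j) := by
  have (j : ι) : Finite (V j).toAddSubgroup := Module.finite_of_finite K (M := V j)
  calc
    Nat.card S ≤ ∏ j, Nat.card (V j) := hS.natCard_le_prod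
    _ = ∏ j, Nat.card K ^ Module.finrank K (V j) :=
      Finset.prod_congr rfl fun _ _ => Module.natCard_eq_pow_finrank
    _ = Nat.card K ^ ∑ j, Module.finrank K (V j) := Finset.prod_pow_eq_pow_sum _ _ _

theorem stmt_4_general {K ι κ : Type*} [DivisionRing K] [Finite K] [Preorder ι] [Fintype ι] [LT κ]
    {A : κ → Type*} [∀ j, AddCommGroup (A j)] [∀ j, Module K (A j)]
    {W : ∀ j, Submodule K (A j)} [∀ j, Module.Finite K (W j)] {H : Set (∀ j, A j)}
    (hper : IsPeriodic (fun j => (W j).toAddSubgroup) H) (Hs : ∀ j, Submodule K (A j))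
    (f : ι ≤i κ) :
    Nat.card {y : ∀ i, A (f i) // (∃ x ∈ H, ∀ i, x (f i) = y i) ∧ ∀ i, y i ∈ Hs (f i)} ≤
      Nat.card K ^ ∑ i, Module.finrank K ↥(W (f i) ⊓ Hs (f i)) := by
  have hcap := (hper.image_initialSeg f).inter_pi fun i => (Hs (f i)).toAddSubgroup
  simpa only [Set.coe_eq_subtype, Set.mem_inter_iff, Set.mem_image, funext_iff, Set.mem_univ_pi,
    SetLike.mem_coe, Submodule.mem_toAddSubgroup] using
    hcap.natCard_le_pow_sum_finrank (V := fun i => W (f i) ⊓ Hs (f i))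

/-- Let `q = h^t` and let `H ⊆ F_q^{mk}` (identified with
`Fin k → Fin m → F_q`) be an `(s,m,k)`-periodic affine subspace with witness `F_q`-subspace
`W ⊆ F_q^m` (`dim_{F_q} W ≤ s`), and let `H_1, …, H_k` be `F_h`-subspaces of `F_q^m`.
Then for every `1 ≤ i ≤ k`, the set `proj_{[1,im]}(H) ∩ (H_1 × ⋯ × H_i)` has at most
`h^(Σ_{j=1}^i dim_{F_h}(W ∩ H_j))` elements. -/
theorem stmt_4 (Fh Fq : Type) [Field Fh] [Fintype Fh] [Field Fq] [Fintype Fq]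
    [Algebra Fh Fq] (t : ℕ) (ht : 1 ≤ t)
    (hq : Fintype.card Fq = Fintype.card Fh ^ t)
    (s m k : ℕ) (hs : 0 < s) (hm : 0 < m) (hk : 0 < k)
    (H : Set (Fin k → Fin m → Fq))
    (haff : ∃ (H₀ : Submodule Fq (Fin k → Fin m → Fq)) (x₀ : Fin k → Fin m → Fq),
      H = {x | x - x₀ ∈ H₀})
    (W : Submodule Fq (Fin m → Fq)) (hWdim : Module.finrank Fq W ≤ s)
    (hper : ∀ (j : Fin k) (a : Fin k → Fin m → Fq), ∃ v : Fin m → Fq,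
      ∀ x ∈ H, (∀ j' : Fin k, j' < j → x j' = a j') → x j - v ∈ W)
    (Hs : Fin k → Submodule Fh (Fin m → Fq))
    (i : ℕ) (hi0 : 0 < i) (hik : i ≤ k) :
    Nat.card {y : Fin i → Fin m → Fq //
        (∃ x ∈ H, ∀ j : Fin i, x (Fin.castLE hik j) = y j) ∧
        (∀ j : Fin i, y j ∈ Hs (Fin.castLE hik j))}
      ≤ Fintype.card Fh ^
          (∑ j : Fin i, Module.finrank Fh ↥((W.restrictScalars Fh) ⊓ Hs (Fin.castLE hik j))) := by
  rw [← Nat.card_eq_fintype_card]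
  exact stmt_4_general (W := fun _ => W.restrictScalars Fh) hper Hs (castLEInitialSeg hik)
end

section
/- Let h be a prime power, ε ∈ (0,1), and let t, m, s be positive integers with s < εm/2, such that εtm and εtm/8 are integers; set q = h^t and M = h^{εtm/8}. Choose F_h-subspaces H_1,…,H_M of F_q^m (viewed as an F_h-vector space of dimension tm), each chosen independently and uniformly at random among all F_h-subspaces of F_h-codimension εtm. Then with probability at least 1 − q^{−ms}, the collection H_1,…,H_M is an (s, 8s/ε, t) F_h-subspace design, i.e., for every F_q-subspace W ⊆ F_q^m of F_q-dimension s, Σ_{i=1}^M dim_{F_h}(H_i ∩ W) ≤ 8s/ε. -/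
/-!
Write `h = |K|`. A random `k`-dimensional `K`-subspace of an `n`-dimensional space contains a fixed
`U` with probability at most `h ^ (-(n - k) * dim U)`: if `V = U ⊕ C`, then every `H ⊇ U` of
dimension `k` can be tilted along the `h ^ ((n - k) * dim U)` linear maps `U → V ⧸ H`, and all
these tilts of all these `H` are pairwise distinct `k`-dimensional subspaces.

If `∑ dim (W ⊓ H i) ≥ l`, then there are `U i ≤ W ⊓ H i` with `∑ dim (U i) = l`. Such a tuple `U` is
spanned by `l` vectors of `W` labelled by indices `i`, so there are at most `(M * |W|) ^ l` of them,
and each is contained in `H` with probability at most `h ^ (-(n - k) * l)`. A union bound over `U`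
and over the at most `|V| ^ s` choices of `W` remains. For `n - k ≥ 7 * e`, `M ≤ h ^ e` and
`|W| ≤ h ^ (4 * e)` this gives at most `|V| ^ s * h ^ (-2 * e * l)`, which is small enough once
`|V| ^ s ≤ h ^ (e * l)`. Here `|V| = h ^ (t * m)` and `e * (8 * s / ε) = t * m * s`, so
`l = ⌈8 * s / ε⌉` works.
-/

open Module

section Subspaces

variable {K V ι : Type*} [DivisionRing K] [AddCommGroup V] [Module K V]

theorem finrank_eq_of_natCard_eq_pow [Finite K] [Module.Finite K V] {n : ℕ}
    (h : Nat.card V = Nat.card K ^ n) : finrank K V = n :=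
  Nat.pow_right_injective Finite.one_lt_card (natCard_eq_pow_finrank.symm.trans h)

theorem exists_submodule_le_finrank_eq (D : Submodule K V) {d : ℕ} (hd : d ≤ finrank K D) :
    ∃ U ≤ D, finrank K U = d := by
  obtain ⟨v, hv⟩ := exists_linearIndependent_of_le_finrank hd
  have hv' : LinearIndependent K (D.subtype ∘ v) := hv.map' D.subtype D.ker_subtype
  refine ⟨Submodule.span K (Set.range (D.subtype ∘ v)), Submodule.span_le.2 ?_, ?_⟩
  · rintro _ ⟨j, rfl⟩
    exact (v j).2
  · rw [finrank_span_eq_card hv', Fintype.card_fin]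

theorem exists_le_sum_finrank_eq [Fintype ι] (D : ι → Submodule K V) {l : ℕ}
    (hl : l ≤ ∑ i, finrank K (D i)) :
    ∃ U ≤ D, ∑ i, finrank K (U i) = l := by
  obtain ⟨d, hd, hdl⟩ := Finsupp.exists_le_degree_eq
    (Finsupp.equivFunOnFinite.symm fun i ↦ finrank K (D i)) l
    (by simpa [Finsupp.degree_eq_sum] using hl)
  choose U hUD hU using fun i ↦ exists_submodule_le_finrank_eq (D i) (hd i)
  exact ⟨U, hUD, by simpa [hU, Finsupp.degree_eq_sum] using hdl⟩

theorem exists_span_preimage_range_eq [Fintype ι] [FiniteDimensional K V]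
    (U : ι → Submodule K V) {l : ℕ} (hl : ∑ i, finrank K (U i) = l) :
    ∃ f : Fin l → ι × V, ∀ i, Submodule.span K (Prod.mk i ⁻¹' Set.range f) = U i := by
  let b (i : ι) : Basis (Fin (finrank K (U i))) K (U i) := finBasis K (U i)
  let σ : Fin l ≃ Σ i, Fin (finrank K (U i)) :=
    (Fintype.equivFinOfCardEq (by simpa using hl)).symm
  let g (x : Σ i, Fin (finrank K (U i))) : ι × V := (x.1, b x.1 x.2)
  refine ⟨g ∘ σ, fun i ↦ ?_⟩
  have hfiber : Prod.mk i ⁻¹' Set.range g = (U i).subtype '' Set.range (b i) := by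
    ext v
    constructor
    · rintro ⟨⟨i', j⟩, h⟩
      obtain ⟨rfl, rfl⟩ := Prod.mk.inj h
      exact ⟨b i' j, ⟨j, rfl⟩, rfl⟩
    · rintro ⟨_, ⟨j, rfl⟩, rfl⟩
      exact ⟨⟨i, j⟩, rfl⟩
  rw [σ.surjective.range_comp, hfiber, Submodule.span_image, (b i).span_eq,
    Submodule.map_subtype_top]

theorem card_sum_finrank_eq_le [Fintype ι] [Finite V] (l : ℕ) :
    Nat.card {U : ι → Submodule K V // ∑ i, finrank K (U i) = l} ≤
      (Fintype.card ι * Nat.card V) ^ l := by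
  choose f hf using fun U : {U : ι → Submodule K V // ∑ i, finrank K (U i) = l} ↦
    exists_span_preimage_range_eq U.1 U.2
  have hinj : Function.Injective f := fun U U' h ↦
    Subtype.ext (funext fun i ↦ by rw [← hf U i, ← hf U' i, h])
  simpa [Nat.card_fun, Nat.card_prod] using Nat.card_le_card_of_injective f hinj

theorem card_finrank_eq_le [Finite V] (s : ℕ) :
    Nat.card {W : Submodule K V // finrank K W = s} ≤ Nat.card V ^ s := by
  have hunique : Nat.card {U : Unit → Submodule K V // ∑ i, finrank K (U i) = s} =
      Nat.card {W : Submodule K V // finrank K W = s} :=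
    Nat.card_congr ((Equiv.funUnique Unit _).subtypeEquiv fun U ↦ by
      rw [Fintype.sum_unique, Equiv.funUnique_apply])
  simpa only [hunique, Fintype.card_unit, one_mul] using
    card_sum_finrank_eq_le (K := K) (V := V) (ι := Unit) s

end Subspaces

section Tilt

variable {K V : Type*} [DivisionRing K] [AddCommGroup V] [Module K V]
  {U C : Submodule K V}

/-- For `V = U ⊕ C`, `U ≤ H` and `φ : U → V ⧸ H`, the subspace obtained from `H = U ⊕ (H ⊓ C)` by
replacing `U` with the graph of `φ`, whose values are lifted along `C → V ⧸ H`. Writing it as a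
kernel avoids choosing the lifts. -/
noncomputable def tilt (hUC : IsCompl U C) (H : Submodule K V) (φ : U →ₗ[K] V ⧸ H) :
    Submodule K V :=
  LinearMap.ker (H.mkQ - φ ∘ₗ U.projectionOnto C hUC)

theorem mem_tilt {hUC : IsCompl U C} {H : Submodule K V} {φ : U →ₗ[K] V ⧸ H} {x : V} :
    x ∈ tilt hUC H φ ↔ H.mkQ x = φ (U.projectionOnto C hUC x) := by
  rw [tilt, LinearMap.mem_ker, LinearMap.sub_apply, sub_eq_zero, LinearMap.comp_apply]

theorem tilt_inf (hUC : IsCompl U C) (H : Submodule K V) (φ : U →ₗ[K] V ⧸ H) :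
    tilt hUC H φ ⊓ C = H ⊓ C := by
  ext x
  simp only [Submodule.mem_inf, and_congr_left_iff]
  intro hx
  rw [mem_tilt, (Submodule.projectionOnto_apply_eq_zero_iff hUC).2 hx, map_zero,
    Submodule.mkQ_apply, Submodule.Quotient.mk_eq_zero]

theorem exists_mem_mkQ_eq_of_codisjoint (hUC : Codisjoint U C) {H : Submodule K V} (hUH : U ≤ H)
    (y : V ⧸ H) :
    ∃ x ∈ C, H.mkQ x = y := by
  have hHC : H ⊔ C = ⊤ := (hUC.mono_left hUH).eq_top
  have htop : C.map H.mkQ = ⊤ := by rw [Submodule.map_mkQ_eq_top, hHC]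
  exact Submodule.mem_map.1 (htop ▸ Submodule.mem_top)

theorem finrank_tilt [FiniteDimensional K V] (hUC : IsCompl U C) {H : Submodule K V}
    (hUH : U ≤ H) (φ : U →ₗ[K] V ⧸ H) : finrank K (tilt hUC H φ) = finrank K H := by
  have hrange : LinearMap.range (H.mkQ - φ ∘ₗ U.projectionOnto C hUC) = ⊤ := by
    refine LinearMap.range_eq_top.2 fun y ↦ ?_
    obtain ⟨x, hxC, hx⟩ := exists_mem_mkQ_eq_of_codisjoint hUC.codisjoint hUH y
    refine ⟨x, ?_⟩
    rw [LinearMap.sub_apply, LinearMap.comp_apply,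
      (Submodule.projectionOnto_apply_eq_zero_iff hUC).2 hxC, map_zero, sub_zero, hx]
  have hker := LinearMap.finrank_range_add_finrank_ker (H.mkQ - φ ∘ₗ U.projectionOnto C hUC)
  rw [hrange, finrank_top, ← H.finrank_quotient_add_finrank] at hker
  exact Nat.add_left_cancel hker

theorem eq_of_tilt_eq (hUC : IsCompl U C) {H H' : Submodule K V} (hUH : U ≤ H) (hUH' : U ≤ H')
    {φ : U →ₗ[K] V ⧸ H} {φ' : U →ₗ[K] V ⧸ H'} (h : tilt hUC H φ = tilt hUC H' φ') :
    H = H' := by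
  have hinf : H ⊓ C = H' ⊓ C := by rw [← tilt_inf hUC H φ, h, tilt_inf]
  have hsup {G : Submodule K V} (hUG : U ≤ G) : U ⊔ C ⊓ G = G := by
    rw [← sup_inf_assoc_of_le C hUG, hUC.sup_eq_top, top_inf_eq]
  rw [← hsup hUH, ← hsup hUH', inf_comm C, inf_comm C, hinf]

theorem tilt_injective (hUC : IsCompl U C) {H : Submodule K V} (hUH : U ≤ H) :
    Function.Injective (tilt hUC H) := by
  intro φ φ' h
  ext1 u
  obtain ⟨x, hxC, hx⟩ := exists_mem_mkQ_eq_of_codisjoint hUC.codisjoint hUH (φ u)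
  have hproj : U.projectionOnto C hUC (u + x) = u := by
    rw [map_add, Submodule.projectionOnto_apply_left,
      (Submodule.projectionOnto_apply_eq_zero_iff hUC).2 hxC, add_zero]
  have hmkQ : H.mkQ (u + x) = φ u := by
    rw [map_add, hx, Submodule.mkQ_apply, (Submodule.Quotient.mk_eq_zero H).2 (hUH u.2), zero_add]
  have hmem : (u + x : V) ∈ tilt hUC H φ := by rw [mem_tilt, hproj, hmkQ]
  rw [h, mem_tilt, hproj, hmkQ] at hmem
  exact hmem

end Tilt

section Counting

theorem card_mul_le_of_forall_exists {ι α : Type*} [Finite ι] [Finite α] {P : ι → α → Prop}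
    {Q : α → Prop} {a b : ℕ} (hQ : ∀ x, Q x → ∃ i, P i x)
    (hP : ∀ i, Nat.card {x // P i x} * b ≤ a) :
    Nat.card {x // Q x} * b ≤ Nat.card ι * a := by
  have := Fintype.ofFinite ι
  choose index hindex using hQ
  let toSigma (x : {x // Q x}) : Σ i, {x // P i x} := ⟨index x x.2, x, hindex x x.2⟩
  have hinj : Function.Injective toSigma := fun _ _ h ↦
    Subtype.ext (congrArg (fun p : Σ i, {x // P i x} ↦ (p.2 : α)) h)
  calc Nat.card {x // Q x} * b
      ≤ Nat.card (Σ i, {x // P i x}) * b :=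
        Nat.mul_le_mul_right _ (Nat.card_le_card_of_injective toSigma hinj)
    _ = ∑ i, Nat.card {x // P i x} * b := by rw [Nat.card_sigma, Finset.sum_mul]
    _ ≤ ∑ _i : ι, a := Finset.sum_le_sum fun i _ ↦ hP i
    _ = Nat.card ι * a := by simp

theorem card_forall_eq_prod {ι : Type*} [Fintype ι] {α : ι → Type*} (P : ∀ i, α i → Prop) :
    Nat.card {x : ∀ i, α i // ∀ i, P i (x i)} = ∏ i, Nat.card {y // P i y} := by
  rw [← Nat.card_pi]
  exact Nat.card_congr Equiv.subtypePiEquivPi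

variable {K V ι : Type*} [Field K] [AddCommGroup V] [Module K V] [Finite V]

theorem card_finrank_eq_and_le_mul_pow_le (k : ℕ) (U : Submodule K V) :
    Nat.card {H : Submodule K V // finrank K H = k ∧ U ≤ H} *
        Nat.card K ^ ((finrank K V - k) * finrank K U) ≤
      Nat.card {H : Submodule K V // finrank K H = k} := by
  obtain ⟨C, hUC⟩ := U.exists_isCompl
  have := Fintype.ofFinite {H : Submodule K V // finrank K H = k ∧ U ≤ H}
  have (H : Submodule K V) : Finite (V ⧸ H) := Finite.of_surjective H.mkQ H.mkQ_surjective
  have (H : Submodule K V) : Finite (U →ₗ[K] V ⧸ H) := DFunLike.finite _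
  have hcard (H : {H : Submodule K V // finrank K H = k ∧ U ≤ H}) :
      Nat.card (U →ₗ[K] V ⧸ H.1) = Nat.card K ^ ((finrank K V - k) * finrank K U) := by
    rw [natCard_eq_pow_finrank (K := K), finrank_linearMap, Submodule.finrank_quotient, H.2.1,
      mul_comm]
  let tiltOf (p : Σ H : {H : Submodule K V // finrank K H = k ∧ U ≤ H}, U →ₗ[K] V ⧸ H.1) :
      {H : Submodule K V // finrank K H = k} :=
    ⟨tilt hUC p.1.1 p.2, (finrank_tilt hUC p.1.2.2 p.2).trans p.1.2.1⟩
  have hinj : Function.Injective tiltOf := by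
    rintro ⟨⟨H, hH⟩, φ⟩ ⟨⟨H', hH'⟩, φ'⟩ h
    have htilt : tilt hUC H φ = tilt hUC H' φ' := congrArg Subtype.val h
    obtain rfl := eq_of_tilt_eq hUC hH.2 hH'.2 htilt
    rw [tilt_injective hUC hH.2 htilt]
  simpa [Nat.card_sigma, hcard] using Nat.card_le_card_of_injective tiltOf hinj

variable [Fintype ι]

theorem card_forall_finrank_eq_and_le_mul_pow_le (k : ℕ) (U : ι → Submodule K V) :
    Nat.card {H : ι → Submodule K V // ∀ i, finrank K (H i) = k ∧ U i ≤ H i} *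
        Nat.card K ^ ((finrank K V - k) * ∑ i, finrank K (U i)) ≤
      Nat.card {H : ι → Submodule K V // ∀ i, finrank K (H i) = k} := by
  rw [card_forall_eq_prod fun i (H : Submodule K V) ↦ finrank K H = k ∧ U i ≤ H,
    card_forall_eq_prod fun _ (H : Submodule K V) ↦ finrank K H = k, Finset.mul_sum,
    ← Finset.prod_pow_eq_pow_sum, ← Finset.prod_mul_distrib]
  exact Finset.prod_le_prod' fun i _ ↦ card_finrank_eq_and_le_mul_pow_le k (U i)

theorem card_le_sum_finrank_inf_mul_pow_le (W : Submodule K V) (k l : ℕ) :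
    Nat.card {H : ι → Submodule K V //
        (∀ i, finrank K (H i) = k) ∧ l ≤ ∑ i, finrank K ↥(W ⊓ H i)} *
        Nat.card K ^ ((finrank K V - k) * l) ≤
      (Fintype.card ι * Nat.card W) ^ l *
        Nat.card {H : ι → Submodule K V // ∀ i, finrank K (H i) = k} := by
  let P (U : {U : ι → Submodule K W // ∑ i, finrank K (U i) = l}) (H : ι → Submodule K V) : Prop :=
    ∀ i, finrank K (H i) = k ∧ (U.1 i).map W.subtype ≤ H i
  have hexists (H : ι → Submodule K V)
      (hH : (∀ i, finrank K (H i) = k) ∧ l ≤ ∑ i, finrank K ↥(W ⊓ H i)) : ∃ U, P U H := by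
    have hrank (i : ι) : finrank K ((H i).comap W.subtype) = finrank K ↥(W ⊓ H i) := by
      rw [← Submodule.map_comap_subtype, Submodule.finrank_map_subtype_eq]
    obtain ⟨U, hUH, hU⟩ := exists_le_sum_finrank_eq (fun i ↦ (H i).comap W.subtype)
      (hH.2.trans_eq (Finset.sum_congr rfl fun i _ ↦ (hrank i).symm))
    exact ⟨⟨U, hU⟩, fun i ↦ ⟨hH.1 i, Submodule.map_le_iff_le_comap.2 (hUH i)⟩⟩
  have hP (U : {U : ι → Submodule K W // ∑ i, finrank K (U i) = l}) :
      Nat.card {H // P U H} * Nat.card K ^ ((finrank K V - k) * l) ≤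
        Nat.card {H : ι → Submodule K V // ∀ i, finrank K (H i) = k} := by
    simpa only [Submodule.finrank_map_subtype_eq, U.2] using
      card_forall_finrank_eq_and_le_mul_pow_le k fun i ↦ (U.1 i).map W.subtype
  exact (card_mul_le_of_forall_exists hexists hP).trans
    (Nat.mul_le_mul_right _ (card_sum_finrank_eq_le l))

end Counting

section Design

variable {K V ι : Type*} (L : Type*) [Field K] [DivisionRing L] [Algebra K L] [AddCommGroup V]
  [Module K V] [Module L V] [IsScalarTower K L V] [Fintype ι]

/-- The family `H` of `K`-subspaces of the `L`-vector space `V` is an `(s, A, [L : K])`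
`K`-subspace design. The bound `A` is real because it need not be an integer in applications. -/
def IsSubspaceDesign (s : ℕ) (A : ℝ) (H : ι → Submodule K V) : Prop :=
  ∀ W : Submodule L V, finrank L W = s →
    ((∑ i, finrank K ↥(W.restrictScalars K ⊓ H i) : ℕ) : ℝ) ≤ A

variable [Finite V] {k l s : ℕ} {A : ℝ}

theorem card_not_isSubspaceDesign_mul_pow_le (hA : l ≤ A + 1) :
    Nat.card {H : ι → Submodule K V //
        (∀ i, finrank K (H i) = k) ∧ ¬ IsSubspaceDesign L s A H} *
        Nat.card K ^ ((finrank K V - k) * l) ≤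
      Nat.card V ^ s * ((Fintype.card ι * Nat.card L ^ s) ^ l *
        Nat.card {H : ι → Submodule K V // ∀ i, finrank K (H i) = k}) := by
  let P (W : {W : Submodule L V // finrank L W = s}) (H : ι → Submodule K V) : Prop :=
    (∀ i, finrank K (H i) = k) ∧ l ≤ ∑ i, finrank K ↥(W.1.restrictScalars K ⊓ H i)
  have hexists (H : ι → Submodule K V)
      (hH : (∀ i, finrank K (H i) = k) ∧ ¬ IsSubspaceDesign L s A H) : ∃ W, P W H := by
    obtain ⟨hk, hdesign⟩ := hH
    simp only [IsSubspaceDesign, not_forall, not_le] at hdesign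
    obtain ⟨W, hW, hlt⟩ := hdesign
    refine ⟨⟨W, hW⟩, hk, Nat.lt_succ_iff.1 ?_⟩
    exact_mod_cast hA.trans_lt (add_lt_add_left hlt 1)
  have hP (W : {W : Submodule L V // finrank L W = s}) :
      Nat.card {H // P W H} * Nat.card K ^ ((finrank K V - k) * l) ≤
        (Fintype.card ι * Nat.card L ^ s) ^ l *
          Nat.card {H : ι → Submodule K V // ∀ i, finrank K (H i) = k} := by
    have hW : Nat.card (W.1.restrictScalars K) = Nat.card L ^ s :=
      (natCard_eq_pow_finrank (K := L) (V := W.1)).trans (congrArg _ W.2)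
    simpa only [hW] using card_le_sum_finrank_inf_mul_pow_le (W.1.restrictScalars K) k l
  exact (card_mul_le_of_forall_exists hexists hP).trans
    (Nat.mul_le_mul_right _ (card_finrank_eq_le s))

theorem card_not_isSubspaceDesign_mul_le [Finite K] {e : ℕ} (hA : l ≤ A + 1)
    (hι : Fintype.card ι ≤ Nat.card K ^ e) (hL : Nat.card L ^ s ≤ Nat.card K ^ (4 * e))
    (hV : Nat.card V ^ s ≤ Nat.card K ^ (e * l)) (hk : 7 * e ≤ finrank K V - k) :
    Nat.card {H : ι → Submodule K V //
        (∀ i, finrank K (H i) = k) ∧ ¬ IsSubspaceDesign L s A H} * Nat.card V ^ s ≤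
      Nat.card {H : ι → Submodule K V // ∀ i, finrank K (H i) = k} := by
  have hbad := card_not_isSubspaceDesign_mul_pow_le (K := K) (V := V) (ι := ι) (k := k) (s := s)
    L hA
  set bad := Nat.card {H : ι → Submodule K V //
    (∀ i, finrank K (H i) = k) ∧ ¬ IsSubspaceDesign L s A H}
  set all := Nat.card {H : ι → Submodule K V // ∀ i, finrank K (H i) = k}
  have hK : 0 < Nat.card K := Nat.card_pos
  refine le_of_mul_le_mul_right ?_ (pow_pos hK ((finrank K V - k) * l))
  calc bad * Nat.card V ^ s * Nat.card K ^ ((finrank K V - k) * l)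
      = Nat.card V ^ s * (bad * Nat.card K ^ ((finrank K V - k) * l)) := by ring
    _ ≤ Nat.card V ^ s * (Nat.card V ^ s * ((Fintype.card ι * Nat.card L ^ s) ^ l * all)) := by
        gcongr
    _ ≤ Nat.card K ^ (e * l) * (Nat.card K ^ (e * l) *
          ((Nat.card K ^ e * Nat.card K ^ (4 * e)) ^ l * all)) := by
        gcongr
    _ = all * Nat.card K ^ (7 * e * l) := by ring
    _ ≤ all * Nat.card K ^ ((finrank K V - k) * l) := by
        gcongr

end Design

/-- Existence of random subspace designs. Let `q = h^t`, `ε ∈ (0,1)`,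
`s < εm/2`, and suppose `c := εtm` and `e := εtm/8` are integers; set `M = h^e`. Among all
`M`-tuples of `F_h`-subspaces of `F_q^m` of `F_h`-codimension `c` (i.e., `F_h`-dimension
`tm - c`), the fraction of tuples failing to be an `(s, 8s/ε, t)` `F_h`-subspace design is at
most `q^{-ms}`; i.e., a uniformly random independent choice is a design with probability at
least `1 - q^{-ms}`. -/
theorem stmt_5 (Fh Fq : Type) [Field Fh] [Fintype Fh] [Field Fq] [Fintype Fq]
    [Algebra Fh Fq] (ε : ℝ) (hε0 : 0 < ε) (hε1 : ε < 1)
    (t m s : ℕ) (ht : 0 < t) (hm : 0 < m) (hs : 0 < s)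
    (hsm : (s : ℝ) < ε * m / 2)
    (hq : Fintype.card Fq = Fintype.card Fh ^ t)
    (c e : ℕ) (hc : (c : ℝ) = ε * (t * m)) (he : (8 * e : ℝ) = ε * (t * m))
    (M : ℕ) (hM : M = Fintype.card Fh ^ e) :
    (Nat.card {H : Fin M → Submodule Fh (Fin m → Fq) //
        (∀ i, Module.finrank Fh (H i) = t * m - c) ∧
        ¬ (∀ W : Submodule Fq (Fin m → Fq), Module.finrank Fq W = s →
            ((∑ i, Module.finrank Fh ↥((W.restrictScalars Fh) ⊓ H i) : ℕ) : ℝ)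
              ≤ 8 * s / ε)} : ℝ)
      ≤ ((Fintype.card Fq : ℝ) ^ (m * s))⁻¹ *
        (Nat.card {H : Fin M → Submodule Fh (Fin m → Fq) //
          ∀ i, Module.finrank Fh (H i) = t * m - c} : ℝ) := by
  have hL : Nat.card Fq = Nat.card Fh ^ t := by simpa using hq
  have hV : Nat.card (Fin m → Fq) = Nat.card Fh ^ (t * m) := by
    rw [Nat.card_fun, Nat.card_fin, hL, pow_mul]
  have hce : c = 8 * e := by exact_mod_cast hc.trans he.symm
  have hcn : c ≤ t * m := by
    exact_mod_cast hc.trans_le (mul_le_of_le_one_left (by positivity) hε1.le)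
  have hts : t * s ≤ 4 * e := by
    have : (t * s : ℝ) ≤ 4 * e := calc
      (t * s : ℝ) ≤ t * (ε * m / 2) := by gcongr
      _ = 4 * e := by linear_combination -he / 2
    exact_mod_cast this
  have htms : t * m * s ≤ e * ⌈8 * s / ε⌉₊ := by
    have : (t * m * s : ℝ) ≤ e * ⌈8 * s / ε⌉₊ := calc
      (t * m * s : ℝ) = e * (8 * s / ε) := by field_simp; linear_combination -he
      _ ≤ e * ⌈8 * s / ε⌉₊ := by gcongr; exact Nat.le_ceil _
    exact_mod_cast this
  have hbad := card_not_isSubspaceDesign_mul_le (K := Fh) (V := Fin m → Fq) (ι := Fin M)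
    (k := t * m - c) (s := s) (e := e) Fq
    (Nat.ceil_lt_add_one (by positivity : 0 ≤ 8 * s / ε)).le (by simp [hM])
    (by rw [hL, ← pow_mul]; exact Nat.pow_le_pow_right Nat.card_pos hts)
    (by rw [hV, ← pow_mul]; exact Nat.pow_le_pow_right Nat.card_pos htms)
    (by rw [finrank_eq_of_natCard_eq_pow hV, Nat.sub_sub_self hcn]; lia)
  rw [inv_mul_eq_div, le_div_iff₀ (by positivity)]
  simpa [pow_mul, IsSubspaceDesign] using (Nat.cast_le (α := ℝ)).2 hbad
end

section
/- Let h be a prime power, let t, m be positive integers with q := h^t > h^{m−1}, let 1 ≤ s ≤ m, let γ_1,…,γ_m be distinct elements of F_q^*, and set d_j = h^{m−j} for j = 1,…,m. For i = 1,…,s define f_i(x_1,…,x_m) = Σ_{j=1}^m γ_j^i · x_j^{d_j}, and let V₀ = {x ∈ F_q^m : f_1(x) = ⋯ = f_s(x) = 0}. Then: (i) V₀ is an F_h-linear subspace of F_q^m (viewing F_q^m as an F_h-vector space) of cardinality exactly q^{m−s}; and (ii) for every multiple n of m, the product set S = V₀^{n/m} ⊆ F_q^n is an F_h-linear subspace of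 cardinality q^{(m−s)n/m} which is (k, h^{(m−1)k})-subspace-evasive for every integer 1 ≤ k ≤ s. -/
/-!
Write `L = F_q`, `K = F_h` and let `σ` be the Frobenius of `L / K`; the argument works for every
cyclic Galois extension `L / K` with generator `σ`. The bijection `x_j ↦ σ ^ (m - j) x_j` turns
`V₀` into the kernel of a matrix of Vandermonde type, which gives its size.

For evasiveness let `U ⊆ L ^ m` with `dim_L U ≤ s`, put `E = U ∩ V₀`, and call a coordinate a pivot
if on `U` it is not an `L`-combination of earlier coordinates; there are at most `dim_L U` pivots.
Let `G` be the `L`-span in `Hom_K(E, L)` of the twists `σ ^ i ∘ x_j` with `j` a pivot and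
`i < m - 1`. By induction on `i + j` every twist `σ ^ i ∘ x_j` lies in `G`: a non-pivot reduces to
twists `σ ^ i ∘ x_l` with `l < j`, and for a pivot with `i ≥ m - 1` the relations defining `V₀`,
twisted by a power of `σ`, determine the at most `s` pivot terms `σ ^ (i + j - l) ∘ x_l` from the
non-pivot ones, by Vandermonde elimination. Since the powers of `σ` span `End_K(L)` over `L`
(Dedekind), the twists of the coordinates span `Hom_K(E, L)`, so
`dim_K E = dim_L Hom_K(E, L) = dim_L G ≤ (m - 1) dim_L U`. Evasiveness passes to products by
rank-nullity, one factor at a time.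
-/

open Finset Module

section LinearAlgebra

variable {K M N ι : Type*} [Field K] [AddCommGroup M] [Module K M] [AddCommGroup N] [Module K N]

theorem linearIndepOn_setOf_notMem_span_Iio [LinearOrder ι] (v : ι → M) :
    LinearIndepOn K v {j | v j ∉ Submodule.span K (v '' Set.Iio j)} := by
  rw [linearIndepOn_iff_linearIndepOn_finset]
  intro P
  induction P using Finset.induction_on_max with
  | empty => simp
  | insert a P hlt ih =>
    intro hP
    rw [coe_insert] at hP ⊢
    refine (ih ((Set.subset_insert _ _).trans hP)).insert fun ha => hP (Set.mem_insert a P) ?_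
    exact Submodule.span_mono (Set.image_mono fun p hp => hlt p hp) ha

theorem exists_card_le_finrank_forall_notMem_mem_span_Iio [FiniteDimensional K M] [Finite ι]
    [LinearOrder ι] (v : ι → M) :
    ∃ P : Finset ι, #P ≤ finrank K M ∧ ∀ j ∉ P, v j ∈ Submodule.span K (v '' Set.Iio j) := by
  classical
  cases nonempty_fintype ι
  let P : Finset ι := {j | v j ∉ Submodule.span K (v '' Set.Iio j)}
  refine ⟨P, ?_, fun j hj => by simpa [P] using hj⟩
  simpa [P] using (linearIndepOn_setOf_notMem_span_Iio v).fintype_card_le_finrank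

theorem finrank_map_add_finrank_inf_ker (f : M →ₗ[K] N) (p : Submodule K M)
    [FiniteDimensional K p] :
    finrank K (p.map f) + finrank K ↥(p ⊓ LinearMap.ker f) = finrank K p := by
  rw [← (f.domRestrict p).finrank_range_add_finrank_ker, LinearMap.range_domRestrict,
    LinearMap.ker_domRestrict, ← Submodule.map_comap_subtype,
    Submodule.finrank_map_subtype_eq]

theorem eq_zero_of_forall_sum_pow_succ_mul_eq_zero [Fintype ι] {γ a : ι → K} {s : ℕ}
    (hinj : Function.Injective γ) (hγ : ∀ j, γ j ≠ 0) (hs : Fintype.card ι ≤ s)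
    (h : ∀ i < s, ∑ j, γ j ^ (i + 1) * a j = 0) : a = 0 := by
  let e := Fintype.equivFin ι
  have hzero := Matrix.eq_zero_of_forall_pow_sum_mul_pow_eq_zero
    (f := γ ∘ e.symm) (v := (γ * a) ∘ e.symm) (hinj.comp e.symm.injective) fun i => by
      rw [← h i (i.2.trans_le hs), ← e.symm.sum_comp]
      exact sum_congr rfl fun j _ => by simp only [Function.comp_apply, Pi.mul_apply]; ring
  funext j
  simpa [hγ] using congrFun hzero (e j)

theorem mem_of_forall_sum_pow_succ_smul_mem {G : Submodule K M} {P : Finset ι} {γ : ι → K}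
    {w : ι → M} {s : ℕ} (hinj : Set.InjOn γ P) (hγ : ∀ j ∈ P, γ j ≠ 0) (hP : #P ≤ s)
    (h : ∀ i < s, ∑ j ∈ P, γ j ^ (i + 1) • w j ∈ G) {j : ι} (hj : j ∈ P) : w j ∈ G := by
  by_contra hw
  obtain ⟨f, hf, hGf⟩ := Submodule.exists_le_ker_of_notMem hw
  have hzero := eq_zero_of_forall_sum_pow_succ_mul_eq_zero (γ := fun l : P => γ l)
    (a := fun l : P => f (w l)) hinj.injective (fun l => hγ l l.2) (by simpa)
    fun i hi => by
      simpa [sum_attach P fun l => γ l ^ (i + 1) * f (w l)] using hGf (h i hi)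
  exact hf (congrFun hzero ⟨j, hj⟩)

/-- The `s × ι` matrix of Vandermonde type with rows `(γ_j ^ i)_j` for `1 ≤ i ≤ s`; since rows are
indexed from `0`, the exponent is shifted by one. -/
def powerMatrix (γ : ι → K) (s : ℕ) : Matrix (Fin s) ι K :=
  .of fun i j => γ j ^ ((i : ℕ) + 1)

theorem linearIndependent_row_powerMatrix [Fintype ι] {γ : ι → K} {s : ℕ}
    (hinj : Function.Injective γ) (hγ : ∀ j, γ j ≠ 0) (hs : s ≤ Fintype.card ι) :
    LinearIndependent K (powerMatrix γ s).row := by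
  rw [Fintype.linearIndependent_iff]
  intro a ha
  obtain ⟨e⟩ : Nonempty (Fin s ↪ ι) := Function.Embedding.nonempty_of_card_le (by simpa)
  refine congrFun (Matrix.eq_zero_of_forall_index_sum_mul_pow_eq_zero
    (hinj.comp e.injective) fun l => mul_left_cancel₀ (hγ (e l)) ?_)
  have hl : ∑ i, a i * γ (e l) ^ ((i : ℕ) + 1) = 0 := by
    simpa [powerMatrix] using congrFun ha (e l)
  rw [mul_zero, ← hl, mul_sum]
  exact sum_congr rfl fun i _ => by rw [Function.comp_apply]; ring

theorem finrank_ker_powerMatrix [Fintype ι] {γ : ι → K} {s : ℕ}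
    (hinj : Function.Injective γ) (hγ : ∀ j, γ j ≠ 0) (hs : s ≤ Fintype.card ι) :
    finrank K (LinearMap.ker (powerMatrix γ s).mulVecLin) = Fintype.card ι - s := by
  have hrank : finrank K (LinearMap.range (powerMatrix γ s).mulVecLin) = s := by
    simpa [Matrix.rank] using (linearIndependent_row_powerMatrix hinj hγ hs).rank_matrix
  have := (powerMatrix γ s).mulVecLin.finrank_range_add_finrank_ker
  rw [hrank, finrank_fintype_fun_eq_card] at this
  omega

theorem natCard_submodulePi_const {R : Type*} [Semiring R] {M : Type*} [AddCommMonoid M]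
    [Module R M] {ι : Type*} [Finite ι] (V : Submodule R M) :
    Nat.card (Submodule.pi Set.univ fun _ : ι => V) = Nat.card V ^ Nat.card ι :=
  (Nat.card_congr (Equiv.Set.univPi fun _ : ι => (V : Set M))).trans Nat.card_fun

end LinearAlgebra

section Evasive

variable {K L M N : Type*} [Field K] [Field L] [Algebra K L]
  [AddCommGroup M] [Module K M] [Module L M] [IsScalarTower K L M]
  [AddCommGroup N] [Module K N] [Module L N] [IsScalarTower K L N]

variable (L) in
/-- A `K`-subspace `V` of an `L`-vector space is evasive if every `L`-subspace `U` of dimension at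
most `s` meets it in a `K`-space of dimension at most `c * dim_L U`. Over a field `K` with `h`
elements this says that `V` is `(k, h ^ (c * k))`-subspace-evasive for all `k ≤ s`. -/
def IsLinearlyEvasive (s c : ℕ) (V : Submodule K M) : Prop :=
  ∀ U : Submodule L M, finrank L U ≤ s →
    finrank K ↥(U.restrictScalars K ⊓ V) ≤ c * finrank L U

namespace IsLinearlyEvasive

variable {s c : ℕ} {V W : Submodule K M}

theorem bot : IsLinearlyEvasive L s c (⊥ : Submodule K M) := by
  intro U _
  rw [inf_bot_eq, finrank_bot]
  exact Nat.zero_le _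

variable [FiniteDimensional K M]

theorem mono (hW : IsLinearlyEvasive L s c W) (hVW : V ≤ W) : IsLinearlyEvasive L s c V :=
  fun U hU => (Submodule.finrank_mono (inf_le_inf_left _ hVW)).trans (hW U hU)

theorem of_map_of_inf_ker (π : M →ₗ[L] N)
    (hmap : IsLinearlyEvasive L s c (V.map (π.restrictScalars K)))
    (hker : IsLinearlyEvasive L s c (V ⊓ LinearMap.ker (π.restrictScalars K))) :
    IsLinearlyEvasive L s c V := by
  have : FiniteDimensional L M := .right K L M
  intro U hU
  have hdim := finrank_map_add_finrank_inf_ker π U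
  have himage : finrank K ((U.restrictScalars K ⊓ V).map (π.restrictScalars K)) ≤
      c * finrank L (U.map π) :=
    (Submodule.finrank_mono (Submodule.map_inf_le _)).trans (hmap (U.map π) (by omega))
  have hkernel : finrank K ↥(U.restrictScalars K ⊓ V ⊓ LinearMap.ker (π.restrictScalars K)) ≤
      c * finrank L ↥(U ⊓ LinearMap.ker π) := by
    refine (Submodule.finrank_mono ?_).trans (hker (U ⊓ LinearMap.ker π) (by omega))
    exact fun x hx => ⟨⟨hx.1.1, hx.2⟩, hx.1.2, hx.2⟩
  rw [← finrank_map_add_finrank_inf_ker (π.restrictScalars K), ← hdim, mul_add]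
  exact add_le_add himage hkernel

theorem natCard_inter_le [Fintype K] (hV : IsLinearlyEvasive L s c V) {U : Submodule L M}
    (hU : finrank L U ≤ s) :
    Nat.card ↥((U : Set M) ∩ (V : Set M)) ≤ Fintype.card K ^ (c * finrank L U) := by
  change Nat.card ↥(U.restrictScalars K ⊓ V) ≤ _
  rw [natCard_eq_pow_finrank (K := K), Nat.card_eq_fintype_card]
  exact Nat.pow_le_pow_right Fintype.card_pos (hV U hU)

end IsLinearlyEvasive

theorem IsLinearlyEvasive.pi {ι : Type*} [Finite ι] {M : ι → Type*} [∀ b, AddCommGroup (M b)]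
    [∀ b, Module K (M b)] [∀ b, Module L (M b)] [∀ b, IsScalarTower K L (M b)]
    [∀ b, FiniteDimensional K (M b)]
    {s c : ℕ} {V : ∀ b, Submodule K (M b)} (hV : ∀ b, IsLinearlyEvasive L s c (V b)) :
    IsLinearlyEvasive L s c (Submodule.pi Set.univ V) := by
  classical
  cases nonempty_fintype ι
  suffices h : ∀ t : Finset ι,
      IsLinearlyEvasive L s c (Submodule.pi Set.univ fun b => if b ∈ t then V b else ⊥) by
    simpa using h univ
  intro t
  induction t using Finset.induction_on with
  | empty => exact bot.mono fun x hx => funext fun b => by simpa using hx b trivial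
  | insert a t _ ih =>
    refine of_map_of_inf_ker (LinearMap.proj a) ((hV a).mono ?_) (ih.mono ?_)
    · rintro _ ⟨x, hx, rfl⟩
      simpa using hx a trivial
    · intro x hx b _
      have hxa : x a = 0 := hx.2
      obtain rfl | hb := eq_or_ne b a
      · simp [hxa]
      · simpa [hb] using hx.1 b trivial

end Evasive

section Galois

variable {K L E : Type*} [Field K] [Field L] [Algebra K L] [AddCommGroup E] [Module K E]

theorem span_range_algEquiv_toLinearMap_eq_top [FiniteDimensional K L] [IsGalois K L] :
    Submodule.span L (Set.range fun τ : Gal(L/K) => (τ.toLinearMap : L →ₗ[K] L)) = ⊤ := by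
  have hindep : LinearIndependent L fun τ : Gal(L/K) => (τ.toLinearMap : L →ₗ[K] L) :=
    (linearIndependent_toLinearMap K L L).comp (AlgEquiv.toAlgHom ·) AlgEquiv.coe_toAlgHom_injective
  refine hindep.span_eq_top_of_card_eq_finrank' ?_
  rw [finrank_linearMap_self, ← Nat.card_eq_fintype_card, IsGalois.card_aut_eq_finrank]

/-- Postcomposition of `K`-linear maps into `L` with an automorphism `τ` of `L / K`, used to compare
the twists of coordinates. It is semilinear over `τ` for the `L`-vector space structure coming from
the target. -/
def galTwist (τ : Gal(L/K)) : (E →ₗ[K] L) →ₛₗ[(τ : L →+* L)] (E →ₗ[K] L) where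
  toFun φ := τ.toLinearMap ∘ₗ φ
  map_add' φ ψ := LinearMap.comp_add _ _ _
  map_smul' a φ := by ext z; simp

@[simp]
theorem galTwist_apply (τ : Gal(L/K)) (φ : E →ₗ[K] L) (z : E) : galTwist τ φ z = τ (φ z) := rfl

theorem galTwist_pow_galTwist_pow (σ : Gal(L/K)) (a b : ℕ) (φ : E →ₗ[K] L) :
    galTwist (σ ^ a) (galTwist (σ ^ b) φ) = galTwist (σ ^ (a + b)) φ := by
  ext z
  simp only [galTwist_apply, pow_add, AlgEquiv.mul_apply]

theorem eq_top_of_forall_galTwist_mem [FiniteDimensional K L] [IsGalois K L] {ι : Type*} [Finite ι]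
    {x : ι → E →ₗ[K] L} (hx : ⨅ j, LinearMap.ker (x j) = ⊥) {G : Submodule L (E →ₗ[K] L)}
    (hG : ∀ τ j, galTwist τ (x j) ∈ G) : G = ⊤ := by
  classical
  cases nonempty_fintype ι
  have hcomp : ∀ (ψ : L →ₗ[K] L) j, ψ ∘ₗ x j ∈ G := by
    intro ψ j
    have hspan : Submodule.span L (Set.range fun τ : Gal(L/K) => (τ.toLinearMap : L →ₗ[K] L)) ≤
        G.comap ((x j).lcomp L L) :=
      Submodule.span_le.2 <| by rintro _ ⟨τ, rfl⟩; exact hG τ j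
    exact hspan (span_range_algEquiv_toLinearMap_eq_top (K := K) (L := L) ▸ Submodule.mem_top)
  obtain ⟨g, hg⟩ := (LinearMap.pi x).exists_leftInverse_of_injective (by rw [LinearMap.ker_pi, hx])
  refine (Submodule.eq_top_iff').2 fun φ => ?_
  have hφ : φ = ∑ j, (φ ∘ₗ g ∘ₗ LinearMap.single K (fun _ => L) j) ∘ₗ x j := by
    ext z
    have hz : g (fun j => x j z) = z := LinearMap.congr_fun hg z
    conv_lhs => rw [← hz, ← LinearMap.sum_single_apply (fun _ => L) (fun j => x j z)]
    simp
  rw [hφ]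
  exact G.sum_mem fun j _ => hcomp _ j

section Elimination

variable {σ : Gal(L/K)} {m s : ℕ} {x : Fin m → E →ₗ[K] L} {γ : Fin m → L} {P : Finset (Fin m)}
  {G : Submodule L (E →ₗ[K] L)}

theorem galTwist_mem_of_mem_span {τ : Gal(L/K)} {T : Set (E →ₗ[K] L)} {φ : E →ₗ[K] L}
    (hφ : φ ∈ Submodule.span L T) (hT : ∀ ψ ∈ T, galTwist τ ψ ∈ G) : galTwist τ φ ∈ G :=
  Submodule.span_le (p := G.comap (galTwist τ)) |>.2 hT hφ

theorem galTwist_pow_pivot_mem (hinj : Function.Injective γ) (hγ : ∀ j, γ j ≠ 0) (hP : #P ≤ s)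
    (hrel : ∀ i < s, ∑ j, γ j ^ (i + 1) • galTwist (σ ^ (m - 1 - (j : ℕ))) (x j) = 0)
    {a : ℕ} (hG : ∀ j ∉ P, galTwist (σ ^ (a + (m - 1 - (j : ℕ)))) (x j) ∈ G) {j : Fin m}
    (hj : j ∈ P) : galTwist (σ ^ (a + (m - 1 - (j : ℕ)))) (x j) ∈ G := by
  classical
  have hrel' : ∀ i < s, ∑ l, (σ ^ a) (γ l) ^ (i + 1) •
      galTwist (σ ^ (a + (m - 1 - (l : ℕ)))) (x l) = 0 := by
    intro i hi
    simpa [map_smulₛₗ, galTwist_pow_galTwist_pow] using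
      congrArg (galTwist (σ ^ a)) (hrel i hi)
  refine mem_of_forall_sum_pow_succ_smul_mem (γ := fun l => (σ ^ a) (γ l))
    (w := fun l : Fin m => galTwist (σ ^ (a + (m - 1 - (l : ℕ)))) (x l))
    ((σ ^ a).injective.comp hinj).injOn (fun l _ => (map_ne_zero _).2 (hγ l)) hP (fun i hi => ?_) hj
  have hsplit := hrel' i hi
  rw [← sum_add_sum_compl P] at hsplit
  rw [eq_neg_of_add_eq_zero_left hsplit]
  exact G.neg_mem (G.sum_mem fun l hl => G.smul_mem _ (hG l (mem_compl.1 hl)))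

theorem galTwist_pow_mem (hinj : Function.Injective γ) (hγ : ∀ j, γ j ≠ 0) (hP : #P ≤ s)
    (hspan : ∀ j ∉ P, x j ∈ Submodule.span L (x '' Set.Iio j))
    (hrel : ∀ i < s, ∑ j, γ j ^ (i + 1) • galTwist (σ ^ (m - 1 - (j : ℕ))) (x j) = 0)
    (hG : ∀ j ∈ P, ∀ i < m - 1, galTwist (σ ^ i) (x j) ∈ G) (i : ℕ) (j : Fin m) :
    galTwist (σ ^ i) (x j) ∈ G := by
  induction hN : i + j using Nat.strong_induction_on generalizing i j with | h N ih =>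
  have hfree : ∀ (i : ℕ), ∀ j ∉ P, i + j = N → galTwist (σ ^ i) (x j) ∈ G := by
    intro i j hj hij
    refine galTwist_mem_of_mem_span (hspan j hj) ?_
    rintro _ ⟨l, hl, rfl⟩
    exact ih (i + l) (by have : l < j := hl; omega) i l rfl
  by_cases hj : j ∈ P
  · by_cases hi : i < m - 1
    · exact hG j hj i hi
    · have hexp : N - (m - 1) + (m - 1 - j) = i := by omega
      rw [← hexp]
      exact galTwist_pow_pivot_mem hinj hγ hP hrel (fun l hl => hfree _ l hl (by omega)) hj
  · exact hfree i j hj hN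

end Elimination

/-- The space `V₀`, with the `h`-power Frobenius replaced by an automorphism `σ` of `L / K`: the
vectors `x` for which `(σ ^ (m - j) x_j)_j` is killed by `powerMatrix γ s`. The coordinates are
numbered from `0` here, so that `m - j` becomes `m - 1 - j`. -/
def twistedKernel (σ : Gal(L/K)) {m : ℕ} (γ : Fin m → L) (s : ℕ) : Submodule K (Fin m → L) :=
  ((LinearMap.ker (powerMatrix γ s).mulVecLin).restrictScalars K).comap
    (LinearEquiv.piCongrRight fun j : Fin m => (σ ^ (m - 1 - (j : ℕ))).toLinearEquiv).toLinearMap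

variable {σ : Gal(L/K)} {m s : ℕ} {γ : Fin m → L}

theorem mem_twistedKernel {x : Fin m → L} :
    x ∈ twistedKernel σ γ s ↔
      ∀ i : Fin s, ∑ j, γ j ^ ((i : ℕ) + 1) * (σ ^ (m - 1 - (j : ℕ))) (x j) = 0 := by
  simp [twistedKernel, powerMatrix, funext_iff, Matrix.mulVec, dotProduct]

theorem finrank_twistedKernel (hinj : Function.Injective γ) (hγ : ∀ j, γ j ≠ 0) (hs : s ≤ m) :
    finrank K (twistedKernel σ γ s) = finrank K L * (m - s) := by
  have hs' : s ≤ Fintype.card (Fin m) := by simpa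
  have hker := finrank_ker_powerMatrix hinj hγ hs'
  rw [Fintype.card_fin] at hker
  rw [← hker, finrank_mul_finrank, twistedKernel, Submodule.comap_equiv_eq_map_symm]
  exact LinearEquiv.finrank_map_eq _ _

theorem natCard_twistedKernel [Fintype L] (hinj : Function.Injective γ) (hγ : ∀ j, γ j ≠ 0)
    (hs : s ≤ m) : Nat.card (twistedKernel σ γ s) = Fintype.card L ^ (m - s) := by
  rw [natCard_eq_pow_finrank (K := K), finrank_twistedKernel hinj hγ hs, pow_mul,
    ← natCard_eq_pow_finrank, Nat.card_eq_fintype_card]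

/-- The `j`-th coordinate on a `K`-subspace of `L ^ ι`, as a vector of the `L`-space of `K`-linear
maps in which the twists are compared. -/
def coordOn {ι : Type*} (E : Submodule K (ι → L)) (j : ι) : E →ₗ[K] L :=
  LinearMap.proj j ∘ₗ E.subtype

theorem iInf_ker_coordOn {ι : Type*} (E : Submodule K (ι → L)) :
    ⨅ j, LinearMap.ker (coordOn E j) = ⊥ :=
  (Submodule.eq_bot_iff _).2 fun _ hz =>
    Subtype.ext <| funext fun j => (Submodule.mem_iInf _).1 hz j

theorem exists_coordOn_mem_span_Iio {ι : Type*} [Finite ι] [LinearOrder ι]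
    {E : Submodule K (ι → L)} {U : Submodule L (ι → L)} (hEU : E ≤ U.restrictScalars K) :
    ∃ P : Finset ι, #P ≤ finrank L U ∧
      ∀ j ∉ P, coordOn E j ∈ Submodule.span L (coordOn E '' Set.Iio j) := by
  let y (j : ι) : Dual L U := LinearMap.proj j ∘ₗ U.subtype
  let restrict : Dual L U →ₗ[L] (E →ₗ[K] L) :=
    (Submodule.inclusion hEU).lcomp L L ∘ₗ LinearMap.restrictScalarsₗ K L U L L
  obtain ⟨P, hP, hspan⟩ := exists_card_le_finrank_forall_notMem_mem_span_Iio (K := L) y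
  refine ⟨P, hP.trans_eq Subspace.dual_finrank_eq, fun j hj => ?_⟩
  have := Submodule.apply_mem_span_image_of_mem_span restrict (hspan j hj)
  rwa [Set.image_image] at this

theorem isLinearlyEvasive_twistedKernel [FiniteDimensional K L] [IsGalois K L]
    (hσ : ∀ τ, τ ∈ Subgroup.zpowers σ) (hinj : Function.Injective γ) (hγ : ∀ j, γ j ≠ 0) :
    IsLinearlyEvasive L s (m - 1) (twistedKernel σ γ s) := by
  intro U hU
  let E : Submodule K (Fin m → L) := U.restrictScalars K ⊓ twistedKernel σ γ s
  obtain ⟨P, hP, hspan⟩ := exists_coordOn_mem_span_Iio (inf_le_left : E ≤ U.restrictScalars K)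
  have hrel : ∀ i < s,
      ∑ j, γ j ^ (i + 1) • galTwist (σ ^ (m - 1 - (j : ℕ))) (coordOn E j) = 0 := by
    intro i hi
    ext z
    simpa [coordOn] using mem_twistedKernel.1 z.2.2 ⟨i, hi⟩
  let gen (p : P × Fin (m - 1)) : E →ₗ[K] L := galTwist (σ ^ (p.2 : ℕ)) (coordOn E p.1)
  have hgen : ∀ j ∈ P, ∀ i < m - 1,
      galTwist (σ ^ i) (coordOn E j) ∈ Submodule.span L (Set.range gen) := fun j hj i hi =>
    Submodule.subset_span (Set.mem_range_self (f := gen) (⟨j, hj⟩, ⟨i, hi⟩))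
  have htop : Submodule.span L (Set.range gen) = ⊤ := by
    refine eq_top_of_forall_galTwist_mem (iInf_ker_coordOn E) fun τ j => ?_
    obtain ⟨i, rfl⟩ := mem_powers_iff_mem_zpowers.2 (hσ τ)
    exact galTwist_pow_mem hinj hγ (hP.trans hU) hspan hrel hgen i j
  calc finrank K E = finrank L (E →ₗ[K] L) := (finrank_linearMap_self K L E).symm
    _ = (Set.range gen).finrank L := by rw [Set.finrank, htop, finrank_top]
    _ ≤ Fintype.card (P × Fin (m - 1)) := finrank_range_le_card gen
    _ = (m - 1) * #P := by simp [mul_comm]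
    _ ≤ (m - 1) * finrank L U := Nat.mul_le_mul_left _ hP

end Galois

section FiniteField

variable {K L : Type*} [Field K] [Fintype K] [Field L] [Finite L] [Algebra K L]

theorem frobeniusAlgEquiv_pow_apply (i : ℕ) (x : L) :
    (FiniteField.frobeniusAlgEquivOfAlgebraic K L ^ i) x = x ^ Fintype.card K ^ i := by
  rw [AlgEquiv.coe_pow, FiniteField.coe_frobeniusAlgEquivOfAlgebraic_iterate]

theorem mem_zpowers_frobeniusAlgEquiv (τ : Gal(L/K)) :
    τ ∈ Subgroup.zpowers (FiniteField.frobeniusAlgEquivOfAlgebraic K L) := by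
  obtain ⟨i, rfl⟩ := (FiniteField.bijective_frobeniusAlgEquivOfAlgebraic_pow K L).2 τ
  exact Subgroup.npow_mem_zpowers _ _

end FiniteField

theorem stmt_9_general {Fh Fq : Type*} [Field Fh] [Fintype Fh] [Field Fq] [Fintype Fq]
    [Algebra Fh Fq] {m s : ℕ} (hsm : s ≤ m)
    {γ : Fin m → Fq} (hγinj : Function.Injective γ) (hγ0 : ∀ j, γ j ≠ 0) :
    (∃ V : Submodule Fh (Fin m → Fq),
      (V : Set (Fin m → Fq)) = {x : Fin m → Fq | ∀ i : Fin s,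
        ∑ j, (γ j) ^ ((i : ℕ) + 1) * x j ^ (Fintype.card Fh ^ (m - 1 - (j : ℕ))) = 0} ∧
      Nat.card V = Fintype.card Fq ^ (m - s)) ∧
    (∀ r : ℕ,
      ∃ S : Submodule Fh (Fin r → Fin m → Fq),
        (S : Set (Fin r → Fin m → Fq)) = {x | ∀ b : Fin r, ∀ i : Fin s,
          ∑ j, (γ j) ^ ((i : ℕ) + 1) * x b j ^ (Fintype.card Fh ^ (m - 1 - (j : ℕ))) = 0} ∧
        Nat.card S = Fintype.card Fq ^ ((m - s) * r) ∧
        (∀ U : Submodule Fq (Fin r → Fin m → Fq), Module.finrank Fq U ≤ s →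
            Nat.card ↥((U : Set (Fin r → Fin m → Fq)) ∩ (S : Set (Fin r → Fin m → Fq)))
              ≤ Fintype.card Fh ^ ((m - 1) * Module.finrank Fq U))) := by
  let V₀ := twistedKernel (FiniteField.frobeniusAlgEquivOfAlgebraic Fh Fq) γ s
  have hmem (x : Fin m → Fq) : x ∈ V₀ ↔ ∀ i : Fin s,
      ∑ j, (γ j) ^ ((i : ℕ) + 1) * x j ^ (Fintype.card Fh ^ (m - 1 - (j : ℕ))) = 0 := by
    simp only [V₀, mem_twistedKernel, frobeniusAlgEquiv_pow_apply]
  have hcard : Nat.card V₀ = Fintype.card Fq ^ (m - s) := natCard_twistedKernel hγinj hγ0 hsm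
  have hevasive : IsLinearlyEvasive Fq s (m - 1) V₀ :=
    isLinearlyEvasive_twistedKernel mem_zpowers_frobeniusAlgEquiv hγinj hγ0
  refine ⟨⟨V₀, Set.ext hmem, hcard⟩, fun r => ⟨Submodule.pi Set.univ fun _ => V₀, ?_, ?_, ?_⟩⟩
  · ext x
    simp [hmem]
  · rw [natCard_submodulePi_const, hcard, Nat.card_fin, pow_mul]
  · exact fun U hU => (IsLinearlyEvasive.pi fun _ => hevasive).natCard_inter_le hU

/-- Let `h` be a prime power (the cardinality of the finite field `Fh`),
`q = h^t > h^(m-1)`, `1 ≤ s ≤ m`, `γ_1, …, γ_m` distinct elements of `F_q^*`, and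
`d_j = h^(m-j)`. Let `V₀ ⊆ F_q^m` be the common zero set of
`f_i(x) = Σ_j γ_j^i x_j^{d_j}` (`i = 1, …, s`). Then (i) `V₀` is an `F_h`-linear subspace
of `F_q^m` of cardinality exactly `q^(m-s)`, and (ii) for every multiple `n = m·r` of `m`,
the product set `S = V₀^r ⊆ F_q^n` is an `F_h`-linear subspace of cardinality
`q^((m-s)·r)` which is `(k, h^((m-1)k))`-subspace-evasive for every `1 ≤ k ≤ s`. -/
theorem stmt_9 (Fh Fq : Type) [Field Fh] [Fintype Fh] [Field Fq] [Fintype Fq]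
    [Algebra Fh Fq] (t m : ℕ) (ht : 0 < t) (hm : 0 < m)
    (hq : Fintype.card Fq = Fintype.card Fh ^ t)
    (hbig : Fintype.card Fh ^ (m - 1) < Fintype.card Fq)
    (s : ℕ) (hs : 1 ≤ s) (hsm : s ≤ m)
    (γ : Fin m → Fq) (hγinj : Function.Injective γ) (hγ0 : ∀ j, γ j ≠ 0) :
    (∃ V : Submodule Fh (Fin m → Fq),
      (V : Set (Fin m → Fq)) = {x : Fin m → Fq | ∀ i : Fin s,
        ∑ j, (γ j) ^ ((i : ℕ) + 1) * x j ^ (Fintype.card Fh ^ (m - 1 - (j : ℕ))) = 0} ∧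
      Nat.card V = Fintype.card Fq ^ (m - s)) ∧
    (∀ r : ℕ, 0 < r →
      ∃ S : Submodule Fh (Fin r → Fin m → Fq),
        (S : Set (Fin r → Fin m → Fq)) = {x | ∀ b : Fin r, ∀ i : Fin s,
          ∑ j, (γ j) ^ ((i : ℕ) + 1) * x b j ^ (Fintype.card Fh ^ (m - 1 - (j : ℕ))) = 0} ∧
        Nat.card S = Fintype.card Fq ^ ((m - s) * r) ∧
        (∀ k : ℕ, 1 ≤ k → k ≤ s →
          ∀ U : Submodule Fq (Fin r → Fin m → Fq), Module.finrank Fq U = k →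
            Nat.card ↥((U : Set (Fin r → Fin m → Fq)) ∩ (S : Set (Fin r → Fin m → Fq)))
              ≤ Fintype.card Fh ^ ((m - 1) * k))) := by
  obtain ⟨hV, hS⟩ := stmt_9_general (Fh := Fh) hsm hγinj hγ0
  refine ⟨hV, fun r _ => ?_⟩
  obtain ⟨S, hSset, hScard, hSevasive⟩ := hS r
  exact ⟨S, hSset, hScard, fun k _ hk U hU => hU ▸ hSevasive U (hU.trans_le hk)⟩
end
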